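/- In the sequent calculus of binding logic over the language with a function symbol f of binding arity ⟨0⟩, a binder Λ of binding arity ⟨1⟩ and a predicate = of binding arity ⟨0,0⟩, the instance (∀x (f(x) = x)) ⇒ Λx f(x) = Λx x of the extensionality scheme is not derivable from the axioms of equality ∀x (x = x), ∀x∀y (x = y ⇒ y = x), ∀x∀y∀z (x = y ⇒ (y = z ⇒ x = z)), ∀x∀y (x = y ⇒ f(x) = f(y)) and ∀x∀y (x = y ⇒ Λz x = Λz y). In particular, there are instances of the extensionality scheme (∀x (t = u)) ⇒ Λx t = Λx u that are not consequences of the axioms of equality. -/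

import Mathlib

/- ## Binding logic: syntax and sequent calculus -/

/-- A binding-logic language: function and predicate symbols with binding arities. -/
structure BSig where
  Fn : Type
  Pr : Type
  /-- binding arity of a function symbol -/
  far : Fn → List ℕ
  /-- binding arity of a predicate symbol -/
  par : Pr → List ℕ

/-- Terms of binding logic (α-equivalence classes, in locally nameless / de Bruijn style):
`bvar i` is a variable bound by a binder of a function symbol or by a quantifier,
`fvar x` is a named free variable.  In `app f a`, the `i`-th argument `a i` is a term
in which `(S.far f).get i` additional variables (de Bruijn indices `0, …, kᵢ - 1`) are bound. -/
inductive Tm (S : BSig) : Type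
  | bvar : ℕ → Tm S
  | fvar : ℕ → Tm S
  | app : (f : S.Fn) → (Fin (S.far f).length → Tm S) → Tm S

variable {S : BSig}

/-- `Tm.WF p t`: all de Bruijn variables of `t` are bound among the `p` ambient binders;
a *term of the language* (over named free variables) at binder depth `p`. -/
def Tm.WF : ℕ → Tm S → Prop
  | p, .bvar i => i < p
  | _, .fvar _ => True
  | p, .app f a => ∀ i, Tm.WF (p + (S.far f).get i) (a i)

/-- Capture-avoiding substitution of the term `u` for the free variable `x`. -/
def Tm.subst (x : ℕ) (u : Tm S) : Tm S → Tm S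
  | .bvar i => .bvar i
  | .fvar y => if y = x then u else .fvar y
  | .app f a => .app f (fun i => Tm.subst x u (a i))

/-- Instantiation of the bound variable `k` by the (locally closed) term `u`. -/
def Tm.openT (u : Tm S) : ℕ → Tm S → Tm S
  | k, .bvar i => if i = k then u else .bvar i
  | _, .fvar y => .fvar y
  | k, .app f a => .app f (fun i => Tm.openT u (k + (S.far f).get i) (a i))

/-- Free (named) variables of a term. -/
def Tm.fv : Tm S → Set ℕ
  | .bvar _ => ∅
  | .fvar x => {x}
  | .app _ a => ⋃ i, (a i).fv

/-- Propositions of binding logic.  In `atom P a`, the `i`-th argument binds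
`(S.par P).get i` variables; quantifiers bind one de Bruijn variable. -/
inductive Fm (S : BSig) : Type
  | atom : (P : S.Pr) → (Fin (S.par P).length → Tm S) → Fm S
  | imp : Fm S → Fm S → Fm S
  | conj : Fm S → Fm S → Fm S
  | disj : Fm S → Fm S → Fm S
  | bot : Fm S
  | all : Fm S → Fm S
  | ex : Fm S → Fm S

/-- `Fm.WF q A`: well-formedness of `A` under `q` ambient quantifiers. -/
def Fm.WF : ℕ → Fm S → Prop
  | q, .atom P a => ∀ i, Tm.WF (q + (S.par P).get i) (a i)
  | q, .imp A B => Fm.WF q A ∧ Fm.WF q B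
  | q, .conj A B => Fm.WF q A ∧ Fm.WF q B
  | q, .disj A B => Fm.WF q A ∧ Fm.WF q B
  | _, .bot => True
  | q, .all A => Fm.WF (q + 1) A
  | q, .ex A => Fm.WF (q + 1) A

/-- Free (named) variables of a proposition. -/
def Fm.fv : Fm S → Set ℕ
  | .atom _ a => ⋃ i, (a i).fv
  | .imp A B => A.fv ∪ B.fv
  | .conj A B => A.fv ∪ B.fv
  | .disj A B => A.fv ∪ B.fv
  | .bot => ∅
  | .all A => A.fv
  | .ex A => A.fv

/-- Instantiation of the quantifier-bound variable `k` of a proposition by a term. -/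
def Fm.openF (u : Tm S) : ℕ → Fm S → Fm S
  | k, .atom P a => .atom P (fun i => Tm.openT u (k + (S.par P).get i) (a i))
  | k, .imp A B => .imp (Fm.openF u k A) (Fm.openF u k B)
  | k, .conj A B => .conj (Fm.openF u k A) (Fm.openF u k B)
  | k, .disj A B => .disj (Fm.openF u k A) (Fm.openF u k B)
  | _, .bot => .bot
  | k, .all A => .all (Fm.openF u (k + 1) A)
  | k, .ex A => .ex (Fm.openF u (k + 1) A)

/-- Capture-avoiding substitution of a term for a free variable in a proposition. -/
def Fm.subst (x : ℕ) (u : Tm S) : Fm S → Fm S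
  | .atom P a => .atom P (fun i => Tm.subst x u (a i))
  | .imp A B => .imp (Fm.subst x u A) (Fm.subst x u B)
  | .conj A B => .conj (Fm.subst x u A) (Fm.subst x u B)
  | .disj A B => .disj (Fm.subst x u A) (Fm.subst x u B)
  | .bot => .bot
  | .all A => .all (Fm.subst x u A)
  | .ex A => .ex (Fm.subst x u A)

/-- Free variables of a multiset of propositions. -/
def mFv (Γ : Multiset (Fm S)) : Set ℕ := {x | ∃ A ∈ Γ, x ∈ A.fv}

/-- The sequent calculus of binding logic: exactly the standard rules of classical
sequent calculus, with capture-avoiding substitution in the quantifier rules. -/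
inductive Deriv (S : BSig) : Multiset (Fm S) → Multiset (Fm S) → Prop
  | ax (A : Fm S) : Deriv S {A} {A}
  | cut {Γ Δ : Multiset (Fm S)} {A : Fm S} :
      Deriv S (A ::ₘ Γ) Δ → Deriv S Γ (A ::ₘ Δ) → Deriv S Γ Δ
  | contrL {Γ Δ} {A : Fm S} : Deriv S (A ::ₘ A ::ₘ Γ) Δ → Deriv S (A ::ₘ Γ) Δ
  | contrR {Γ Δ} {A : Fm S} : Deriv S Γ (A ::ₘ A ::ₘ Δ) → Deriv S Γ (A ::ₘ Δ)
  | weakL {Γ Δ} {A : Fm S} : Deriv S Γ Δ → Deriv S (A ::ₘ Γ) Δ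
  | weakR {Γ Δ} {A : Fm S} : Deriv S Γ Δ → Deriv S Γ (A ::ₘ Δ)
  | impL {Γ Δ} {A B : Fm S} :
      Deriv S Γ (A ::ₘ Δ) → Deriv S (B ::ₘ Γ) Δ → Deriv S ((Fm.imp A B) ::ₘ Γ) Δ
  | impR {Γ Δ} {A B : Fm S} :
      Deriv S (A ::ₘ Γ) (B ::ₘ Δ) → Deriv S Γ ((Fm.imp A B) ::ₘ Δ)
  | conjL {Γ Δ} {A B : Fm S} :
      Deriv S (A ::ₘ B ::ₘ Γ) Δ → Deriv S ((Fm.conj A B) ::ₘ Γ) Δ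
  | conjR {Γ Δ} {A B : Fm S} :
      Deriv S Γ (A ::ₘ Δ) → Deriv S Γ (B ::ₘ Δ) → Deriv S Γ ((Fm.conj A B) ::ₘ Δ)
  | disjL {Γ Δ} {A B : Fm S} :
      Deriv S (A ::ₘ Γ) Δ → Deriv S (B ::ₘ Γ) Δ → Deriv S ((Fm.disj A B) ::ₘ Γ) Δ
  | disjR {Γ Δ} {A B : Fm S} :
      Deriv S Γ (A ::ₘ B ::ₘ Δ) → Deriv S Γ ((Fm.disj A B) ::ₘ Δ)
  | botL {Γ Δ} : Deriv S ((Fm.bot) ::ₘ Γ) Δ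
  | allL {Γ Δ} {A : Fm S} {t : Tm S} : Tm.WF 0 t →
      Deriv S ((Fm.openF t 0 A) ::ₘ Γ) Δ → Deriv S ((Fm.all A) ::ₘ Γ) Δ
  | allR {Γ Δ} {A : Fm S} {x : ℕ} :
      x ∉ mFv Γ → x ∉ mFv Δ → x ∉ A.fv →
      Deriv S Γ ((Fm.openF (Tm.fvar x) 0 A) ::ₘ Δ) → Deriv S Γ ((Fm.all A) ::ₘ Δ)
  | exL {Γ Δ} {A : Fm S} {x : ℕ} :
      x ∉ mFv Γ → x ∉ mFv Δ → x ∉ A.fv →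
      Deriv S ((Fm.openF (Tm.fvar x) 0 A) ::ₘ Γ) Δ → Deriv S ((Fm.ex A) ::ₘ Γ) Δ
  | exR {Γ Δ} {A : Fm S} {t : Tm S} : Tm.WF 0 t →
      Deriv S Γ ((Fm.openF t 0 A) ::ₘ Δ) → Deriv S Γ ((Fm.ex A) ::ₘ Δ)
/- ## The language with f (binding arity ⟨0⟩), Λ (binding arity ⟨1⟩), = (binding arity ⟨0,0⟩) -/

inductive FLSym : Type
  | fsym : FLSym
  | lsym : FLSym

/-- The signature: a function symbol `f` of binding arity `⟨0⟩`, a binder `Λ` of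
binding arity `⟨1⟩`, and a predicate `=` of binding arity `⟨0,0⟩`. -/
def sigFL : BSig where
  Fn := FLSym
  Pr := Unit
  far := fun g => match g with | .fsym => [0] | .lsym => [1]
  par := fun _ => [0, 0]

/-- The atomic proposition `t = u`. -/
def eqF (t u : Tm sigFL) : Fm sigFL := .atom () ![t, u]

/-- `∀x (f(x) = x)`. -/
def extHyp : Fm sigFL := .all (eqF (.app .fsym ![.bvar 0]) (.bvar 0))

/-- `Λx f(x) = Λx x`. -/
def extConc : Fm sigFL :=
  eqF (.app .lsym ![.app .fsym ![.bvar 0]]) (.app .lsym ![.bvar 0])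

/-- `∀x (x = x)`. -/
def axEqRefl : Fm sigFL := .all (eqF (.bvar 0) (.bvar 0))

/-- `∀x ∀y (x = y ⇒ y = x)`. -/
def axEqSymm : Fm sigFL :=
  .all (.all (.imp (eqF (.bvar 1) (.bvar 0)) (eqF (.bvar 0) (.bvar 1))))

/-- `∀x ∀y ∀z (x = y ⇒ (y = z ⇒ x = z))`. -/
def axEqTrans : Fm sigFL :=
  .all (.all (.all (.imp (eqF (.bvar 2) (.bvar 1))
    (.imp (eqF (.bvar 1) (.bvar 0)) (eqF (.bvar 2) (.bvar 0))))))

/-- `∀x ∀y (x = y ⇒ f(x) = f(y))`. -/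
def axEqF : Fm sigFL :=
  .all (.all (.imp (eqF (.bvar 1) (.bvar 0))
    (eqF (.app .fsym ![.bvar 1]) (.app .fsym ![.bvar 0]))))

/-- `∀x ∀y (x = y ⇒ Λz x = Λz y)` (under the binder `Λ`, the quantified variables
are protected from capture, hence the indices are shifted by one). -/
def axEqLam : Fm sigFL :=
  .all (.all (.imp (eqF (.bvar 1) (.bvar 0))
    (eqF (.app .lsym ![.bvar 2]) (.app .lsym ![.bvar 1]))))

/-- The axioms of equality for this language. -/
def eqAxioms : Multiset (Fm sigFL) := {axEqRefl, axEqSymm, axEqTrans, axEqF, axEqLam}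

/-!
The equality axioms hold in every binding model whose predicate `=` is identity on `M₀`, so it
suffices to find one in which `f` is the identity on `M₀` although `Λx f(x)` and `Λx x` differ.
In a binding model the body of a `Λ` is evaluated in `M₁`, which contains an element standing for
the bound variable besides the elements coming from `M₀`; `f` may move that element, and `Λ` may
tell it from its image.

Soundness requires only the weakening maps `Mₚ → M_q` among the substitutions of a binding model:
the quantifier rules instantiate by elements of `M₀`, weakened to the depth of the occurrence.
-/

universe w

/-- Binding models: a family of sets `Mₙ` (`Carrier n`), whose elements depend on `n` bound
variables, with interpretations of the symbols. Of the paper's substitutions only weakening is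
kept: `lift` adds outermost variables, so it preserves de Bruijn indices. -/
structure BindingModel (S : BSig) where
  Carrier : ℕ → Type w
  lift {p q : ℕ} : p ≤ q → Carrier p → Carrier q
  var {p : ℕ} : Fin p → Carrier p
  fn (f : S.Fn) {p : ℕ} : (∀ i, Carrier (p + (S.far f).get i)) → Carrier p
  rel (P : S.Pr) : (∀ i, Carrier ((S.par P).get i)) → Prop
  lift_refl {p : ℕ} (a : Carrier p) : lift le_rfl a = a
  lift_lift {p q r : ℕ} (hpq : p ≤ q) (hqr : q ≤ r) (a : Carrier p) :
    lift hqr (lift hpq a) = lift (hpq.trans hqr) a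
  lift_var {p q : ℕ} (h : p ≤ q) (i : Fin p) : lift h (var i) = var (i.castLE h)
  lift_fn {p q : ℕ} (h : p ≤ q) (f : S.Fn) (a : ∀ i, Carrier (p + (S.far f).get i)) :
    lift h (fn f a) = fn f fun i => lift (Nat.add_le_add_right h _) (a i)

/-- The assignment to quantified variables obtained from `ρ` on passing under a quantifier whose
variable, which takes the de Bruijn index `0`, has the value `b`. -/
def pushValue {α : Type*} (b : α) (ρ : ℕ → α) : ℕ → α
  | 0 => b
  | i + 1 => ρ i

theorem update_pushValue_succ {α : Type*} (b : α) (ρ : ℕ → α) (k : ℕ) (v : α) :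
    Function.update (pushValue b ρ) (k + 1) v = pushValue b (Function.update ρ k v) := by
  funext i
  cases i <;> simp [pushValue, Function.update_apply]

theorem update_const_zero {α : Type*} (b c : α) :
    Function.update (fun _ => c) 0 b = pushValue b fun _ => c := by
  funext i
  cases i <;> simp [pushValue]

namespace BindingModel

variable (M : BindingModel.{w} S)

/-- The value in `M_d` of a term below `d` binders of function or predicate symbols. Free variables
are valued by `σ`; the de Bruijn indices from `d` on refer to quantifiers and are valued by `ρ`. -/
def eval (σ ρ : ℕ → M.Carrier 0) : (d : ℕ) → Tm S → M.Carrier d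
  | d, .bvar i => if h : i < d then M.var ⟨i, h⟩ else M.lift d.zero_le (ρ (i - d))
  | d, .fvar x => M.lift d.zero_le (σ x)
  | d, .app f a => M.fn f fun i => eval σ ρ (d + (S.far f).get i) (a i)

/-- Truth of a proposition, with free variables valued by `σ` and the variables of the enclosing
quantifiers by `ρ`. -/
def Realize (σ : ℕ → M.Carrier 0) : (ℕ → M.Carrier 0) → Fm S → Prop
  | ρ, .atom P a => M.rel P fun i => M.eval σ ρ ((S.par P).get i) (a i)
  | ρ, .imp A B => Realize σ ρ A → Realize σ ρ B
  | ρ, .conj A B => Realize σ ρ A ∧ Realize σ ρ B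
  | ρ, .disj A B => Realize σ ρ A ∨ Realize σ ρ B
  | _, .bot => False
  | ρ, .all A => ∀ b, Realize σ (pushValue b ρ) A
  | ρ, .ex A => ∃ b, Realize σ (pushValue b ρ) A

variable {M}

theorem lift_eval {p q : ℕ} (h : p ≤ q) (σ ρ ρ' : ℕ → M.Carrier 0) {t : Tm S} (ht : t.WF p) :
    M.lift h (M.eval σ ρ p t) = M.eval σ ρ' q t := by
  induction t generalizing p q with
  | bvar i =>
    have hip : i < p := ht
    simp [eval, hip, hip.trans_le h, M.lift_var]
  | fvar x => simp only [eval, M.lift_lift]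
  | app f a ih => simp only [eval, M.lift_fn, fun i => ih i (Nat.add_le_add_right h _) (ht i)]

theorem eval_openT (σ ρ : ℕ → M.Carrier 0) {u : Tm S} (hu : u.WF 0) (k d : ℕ) (t : Tm S) :
    M.eval σ ρ d (Tm.openT u (k + d) t) =
      M.eval σ (Function.update ρ k (M.eval σ ρ 0 u)) d t := by
  induction t generalizing d with
  | bvar i =>
    rcases eq_or_ne i (k + d) with rfl | hne
    · simp [Tm.openT, eval, lift_eval d.zero_le σ ρ ρ hu]
    · have hidx (h : ¬ i < d) : i - d ≠ k := by omega
      simp +contextual [Tm.openT, eval, hne, hidx]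
  | fvar x => rfl
  | app f a ih => simp only [Tm.openT, eval, add_assoc, ih]

theorem realize_openF (σ ρ : ℕ → M.Carrier 0) {u : Tm S} (hu : u.WF 0) (k : ℕ) (A : Fm S) :
    M.Realize σ ρ (Fm.openF u k A) ↔
      M.Realize σ (Function.update ρ k (M.eval σ ρ 0 u)) A := by
  have eval_push (b : M.Carrier 0) (ρ : ℕ → M.Carrier 0) :
      M.eval σ (pushValue b ρ) 0 u = M.eval σ ρ 0 u := by
    rw [← lift_eval le_rfl σ ρ _ hu, M.lift_refl]
  induction A generalizing ρ k with
  | atom P a => simp only [Fm.openF, Realize, eval_openT σ ρ hu]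
  | imp A B ihA ihB | conj A B ihA ihB | disj A B ihA ihB =>
    simp only [Fm.openF, Realize, ihA, ihB]
  | bot => rfl
  | all A ih | ex A ih =>
    simp only [Fm.openF, Realize, ih, update_pushValue_succ, eval_push]

theorem eval_congr {σ τ : ℕ → M.Carrier 0} (ρ : ℕ → M.Carrier 0) (d : ℕ) {t : Tm S}
    (h : Set.EqOn σ τ t.fv) : M.eval σ ρ d t = M.eval τ ρ d t := by
  induction t generalizing d with
  | bvar i => rfl
  | fvar x => simp only [eval, h (Set.mem_singleton x)]
  | app f a ih =>
    have eq_args (i) (d : ℕ) : M.eval σ ρ d (a i) = M.eval τ ρ d (a i) :=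
      ih i d (h.mono (Set.subset_iUnion (fun i => (a i).fv) i))
    simp only [eval, eq_args]

theorem realize_congr {σ τ : ℕ → M.Carrier 0} (ρ : ℕ → M.Carrier 0) {A : Fm S}
    (h : Set.EqOn σ τ A.fv) : M.Realize σ ρ A ↔ M.Realize τ ρ A := by
  induction A generalizing ρ with
  | atom P a =>
    have eq_args (i) (d : ℕ) : M.eval σ ρ d (a i) = M.eval τ ρ d (a i) :=
      eval_congr ρ d (h.mono (Set.subset_iUnion (fun i => (a i).fv) i))
    simp only [Realize, eq_args]
  | imp A B ihA ihB | conj A B ihA ihB | disj A B ihA ihB =>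
    simp only [Realize, ihA ρ (h.mono Set.subset_union_left),
      ihB ρ (h.mono Set.subset_union_right)]
  | bot => rfl
  | all A ih | ex A ih => simp only [Realize, fun b => ih (pushValue b ρ) h]

theorem realize_update_of_notMem {σ ρ : ℕ → M.Carrier 0} {x : ℕ} {b : M.Carrier 0} {A : Fm S}
    (hx : x ∉ A.fv) : M.Realize (Function.update σ x b) ρ A ↔ M.Realize σ ρ A :=
  realize_congr ρ fun _ hy => Function.update_of_ne (ne_of_mem_of_not_mem hy hx) b σ

variable (M) in
/-- Validity of the sequent `Γ ⊢ Δ` in `M`. Nothing forces the propositions of a derivation to be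
well-formed; their dangling de Bruijn indices all get the value `c`, so that instantiating a
quantifier, which does not renumber them, preserves their value. -/
def Entails (c : M.Carrier 0) (Γ Δ : Multiset (Fm S)) : Prop :=
  ∀ σ, (∀ A ∈ Γ, M.Realize σ (fun _ => c) A) → ∃ B ∈ Δ, M.Realize σ (fun _ => c) B

variable {c : M.Carrier 0} {Γ Δ : Multiset (Fm S)} {A : Fm S}

theorem exists_mem_cons_realize {σ ρ : ℕ → M.Carrier 0} :
    (∃ B ∈ A ::ₘ Δ, M.Realize σ ρ B) ↔ M.Realize σ ρ A ∨ ∃ B ∈ Δ, M.Realize σ ρ B := by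
  simp only [Multiset.mem_cons, or_and_right, exists_or, exists_eq_left]

theorem realize_openF_zero {σ : ℕ → M.Carrier 0} {t : Tm S} (ht : t.WF 0) :
    M.Realize σ (fun _ => c) (Fm.openF t 0 A) ↔
      M.Realize σ (pushValue (M.eval σ (fun _ => c) 0 t) fun _ => c) A := by
  rw [realize_openF σ _ ht, update_const_zero]

theorem realize_openF_fvar {σ : ℕ → M.Carrier 0} {x : ℕ} (hx : x ∉ A.fv) (b : M.Carrier 0) :
    M.Realize (Function.update σ x b) (fun _ => c) (Fm.openF (.fvar x) 0 A) ↔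
      M.Realize σ (pushValue b fun _ => c) A := by
  have eval_fvar : M.eval (Function.update σ x b) (fun _ => c) 0 (.fvar x) = b := by
    simp only [eval, M.lift_refl, Function.update_self]
  have fvar_wf : (Tm.fvar x : Tm S).WF 0 := trivial
  rw [realize_openF_zero fvar_wf, eval_fvar, realize_update_of_notMem hx]

theorem Entails.allL {t : Tm S} (ht : t.WF 0) (h : M.Entails c (Fm.openF t 0 A ::ₘ Γ) Δ) :
    M.Entails c (.all A ::ₘ Γ) Δ := by
  intro σ hσ
  rw [Multiset.forall_mem_cons] at hσ
  exact h σ (Multiset.forall_mem_cons.2 ⟨(realize_openF_zero ht).2 (hσ.1 _), hσ.2⟩)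

theorem Entails.exR {t : Tm S} (ht : t.WF 0) (h : M.Entails c Γ (Fm.openF t 0 A ::ₘ Δ)) :
    M.Entails c Γ (.ex A ::ₘ Δ) := by
  intro σ hσ
  exact exists_mem_cons_realize.2 <| (exists_mem_cons_realize.1 (h σ hσ)).imp_left
    fun hA => ⟨_, (realize_openF_zero ht).1 hA⟩

theorem forall_mem_realize_update {σ ρ : ℕ → M.Carrier 0} {x : ℕ} {b : M.Carrier 0}
    (hx : x ∉ mFv Γ) (hσ : ∀ B ∈ Γ, M.Realize σ ρ B) :
    ∀ B ∈ Γ, M.Realize (Function.update σ x b) ρ B :=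
  fun B hB => (realize_update_of_notMem fun hxB => hx ⟨B, hB, hxB⟩).2 (hσ B hB)

theorem exists_mem_realize_of_update {σ ρ : ℕ → M.Carrier 0} {x : ℕ} {b : M.Carrier 0}
    (hx : x ∉ mFv Δ) (h : ∃ B ∈ Δ, M.Realize (Function.update σ x b) ρ B) :
    ∃ B ∈ Δ, M.Realize σ ρ B :=
  h.imp fun B ⟨hB, hBσ⟩ => ⟨hB, (realize_update_of_notMem fun hxB => hx ⟨B, hB, hxB⟩).1 hBσ⟩

theorem Entails.allR {x : ℕ} (hΓ : x ∉ mFv Γ) (hΔ : x ∉ mFv Δ) (hA : x ∉ A.fv)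
    (h : M.Entails c Γ (Fm.openF (.fvar x) 0 A ::ₘ Δ)) : M.Entails c Γ (.all A ::ₘ Δ) := by
  intro σ hσ
  rw [exists_mem_cons_realize, or_iff_not_imp_right]
  intro hσΔ b
  rcases exists_mem_cons_realize.1 (h _ (forall_mem_realize_update hΓ hσ)) with hb | hb
  · exact (realize_openF_fvar hA b).1 hb
  · exact absurd (exists_mem_realize_of_update hΔ hb) hσΔ

theorem Entails.exL {x : ℕ} (hΓ : x ∉ mFv Γ) (hΔ : x ∉ mFv Δ) (hA : x ∉ A.fv)
    (h : M.Entails c (Fm.openF (.fvar x) 0 A ::ₘ Γ) Δ) : M.Entails c (.ex A ::ₘ Γ) Δ := by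
  intro σ hσ
  obtain ⟨⟨b, hb⟩, hσΓ⟩ := Multiset.forall_mem_cons.1 hσ
  exact exists_mem_realize_of_update hΔ <| h _ <| Multiset.forall_mem_cons.2
    ⟨(realize_openF_fvar hA b).2 hb, forall_mem_realize_update hΓ hσΓ⟩

end BindingModel

open BindingModel

theorem Deriv.sound {Γ Δ : Multiset (Fm S)} (h : Deriv S Γ Δ) (M : BindingModel.{w} S)
    (c : M.Carrier 0) : M.Entails c Γ Δ := by
  induction h with
  | allL ht _ ih => exact ih.allL ht
  | exR ht _ ih => exact ih.exR ht
  | allR hΓ hΔ hA _ ih => exact ih.allR hΓ hΔ hA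
  | exL hΓ hΔ hA _ ih => exact ih.exL hΓ hΔ hA
  | ax A => exact fun σ hσ => ⟨A, by simp, hσ A (by simp)⟩
  | botL => exact fun σ hσ => (hσ _ (Multiset.mem_cons_self _ _)).elim
  | contrL _ ih | contrR _ ih | weakL _ ih | weakR _ ih | impR _ ih | conjL _ ih | disjR _ ih =>
    intro σ
    have := ih σ
    simp only [Multiset.forall_mem_cons, exists_mem_cons_realize, Realize] at this ⊢
    tauto
  | cut _ _ ih₁ ih₂ | impL _ _ ih₁ ih₂ | conjR _ _ ih₁ ih₂ | disjL _ _ ih₁ ih₂ =>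
    intro σ
    have h₁ := ih₁ σ
    have h₂ := ih₂ σ
    simp only [Multiset.forall_mem_cons, exists_mem_cons_realize, Realize] at h₁ h₂ ⊢
    tauto

namespace BindingModel

/-- Normal models, in which `=` is interpreted as identity on `M₀`. -/
def IsNormal (M : BindingModel.{w} sigFL) : Prop :=
  ∀ a : ∀ i, M.Carrier ((sigFL.par ()).get i), M.rel () a ↔ a (0 : Fin 2) = a (1 : Fin 2)

variable {M : BindingModel.{w} sigFL}

theorem IsNormal.realize_eqF (hM : M.IsNormal) {σ ρ : ℕ → M.Carrier 0} {t u : Tm sigFL} :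
    M.Realize σ ρ (eqF t u) ↔ M.eval σ ρ 0 t = M.eval σ ρ 0 u :=
  hM _

theorem eval_fsym_congr {σ ρ : ℕ → M.Carrier 0} {d : ℕ} {t u : Tm sigFL}
    (h : M.eval σ ρ d t = M.eval σ ρ d u) :
    M.eval σ ρ d (.app .fsym ![t]) = M.eval σ ρ d (.app .fsym ![u]) :=
  congrArg (M.fn .fsym) (funext (Fin.forall_fin_one.2 h))

theorem eval_lsym_congr {σ ρ : ℕ → M.Carrier 0} {d : ℕ} {t u : Tm sigFL}
    (h : M.eval σ ρ (d + 1) t = M.eval σ ρ (d + 1) u) :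
    M.eval σ ρ d (.app .lsym ![t]) = M.eval σ ρ d (.app .lsym ![u]) :=
  congrArg (M.fn .lsym) (funext (Fin.forall_fin_one.2 h))

theorem IsNormal.realize_of_mem_eqAxioms (hM : M.IsNormal) (σ ρ : ℕ → M.Carrier 0) :
    ∀ A ∈ eqAxioms, M.Realize σ ρ A := by
  simp only [eqAxioms, Multiset.insert_eq_cons, Multiset.forall_mem_cons, Multiset.mem_singleton,
    forall_eq, axEqRefl, axEqSymm, axEqTrans, axEqF, axEqLam, Realize, hM.realize_eqF]
  refine ⟨fun _ => trivial, fun _ _ => Eq.symm, fun _ _ _ => Eq.trans, fun _ _ => eval_fsym_congr,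
    fun x y h => eval_lsym_congr ?_⟩
  have hxy : M.lift le_rfl x = M.lift le_rfl y := h
  rw [M.lift_refl, M.lift_refl] at hxy
  exact congrArg (M.lift zero_le_one) hxy

end BindingModel

/-- The set `Mₙ` of the countermodel: `(none, false)` and `(none, true)` are `kₙ` and `lₙ`,
while `(some i, false)` is the bound variable of de Bruijn index `i` and `(some i, true)` its barred
copy. -/
abbrev MarkedVar (n : ℕ) : Type := Option (Fin n) × Bool

namespace MarkedVar

/-- Weakening: the inclusion of `Mₚ` in `M_q`. -/
def lift {p q : ℕ} (h : p ≤ q) (a : MarkedVar p) : MarkedVar q := (a.1.map (Fin.castLE h), a.2)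

/-- The interpretation of `f`: it fixes `kₙ` and `lₙ` and bars the variables. -/
def bar {n : ℕ} (a : MarkedVar n) : MarkedVar n := (a.1, a.1.isSome || a.2)

/-- The interpretation of `Λ`: the bound variable `0` becomes `kₙ` and its barred copy `lₙ`; the
other variables are renumbered. -/
def lam {n : ℕ} (a : MarkedVar (n + 1)) : MarkedVar n :=
  (a.1.bind (Fin.cases none some), a.2)

theorem lift_bar {p q : ℕ} (h : p ≤ q) (a : MarkedVar p) : lift h (bar a) = bar (lift h a) := by
  simp [lift, bar]

theorem lift_lam {p q : ℕ} (h : p ≤ q) (a : MarkedVar (p + 1)) :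
    lift h (lam a) = lam (lift (Nat.add_le_add_right h 1) a) := by
  rcases a with ⟨_ | i, b⟩
  · rfl
  · cases i using Fin.cases <;> rfl

theorem bar_eq_self (a : MarkedVar 0) : bar a = a := by
  rcases a with ⟨_ | i, b⟩
  · rfl
  · exact i.elim0

/-- The interpretation of the function symbols. -/
def interp {n : ℕ} :
    (g : FLSym) → (∀ i, MarkedVar (n + (sigFL.far g).get i)) → MarkedVar n
  | .fsym, a => bar (a (0 : Fin 1))
  | .lsym, a => lam (a (0 : Fin 1))

end MarkedVar

/-- The countermodel to extensionality, with `=` interpreted as identity on `M₀`. -/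
def markedModel : BindingModel sigFL where
  Carrier := MarkedVar
  lift := MarkedVar.lift
  var i := (some i, false)
  fn g := MarkedVar.interp g
  rel _ a := a (0 : Fin 2) = a (1 : Fin 2)
  lift_refl a := by simp [MarkedVar.lift]
  lift_lift _ _ a := by simp [MarkedVar.lift, Function.comp_def]
  lift_var _ _ := rfl
  lift_fn h
    | .fsym, a => MarkedVar.lift_bar h (a (0 : Fin 1))
    | .lsym, a => MarkedVar.lift_lam h (a (0 : Fin 1))

theorem markedModel_isNormal : markedModel.IsNormal := fun _ => Iff.rfl

theorem markedModel_realize_extHyp (σ ρ : ℕ → markedModel.Carrier 0) :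
    markedModel.Realize σ ρ extHyp :=
  fun b => MarkedVar.bar_eq_self (MarkedVar.lift le_rfl b)

theorem markedModel_not_realize_extConc (σ ρ : ℕ → markedModel.Carrier 0) :
    ¬ markedModel.Realize σ ρ extConc := by
  have eval_lam_f : markedModel.eval σ ρ 0 (.app .lsym ![.app .fsym ![.bvar 0]]) = (none, true) :=
    rfl
  have eval_lam_var : markedModel.eval σ ρ 0 (.app .lsym ![.bvar 0]) = (none, false) := rfl
  intro h
  have lam_eq : ((none, true) : MarkedVar 0) = (none, false) :=
    eval_lam_f.symm.trans ((markedModel_isNormal.realize_eqF.1 h).trans eval_lam_var)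
  simp at lam_eq

/-- **Independence of the extensionality scheme.**  In the sequent calculus of binding
logic, the instance `(∀x (f(x) = x)) ⇒ Λx f(x) = Λx x` of the extensionality scheme is
not derivable from the axioms of equality; in particular there are instances
`(∀x (t = u)) ⇒ Λx t = Λx u` of the extensionality scheme that are not consequences of
the axioms of equality. -/
theorem extensionality_independent :
    (¬ Deriv sigFL eqAxioms {Fm.imp extHyp extConc}) ∧
    (∃ t u : Tm sigFL, Tm.WF 1 t ∧ Tm.WF 1 u ∧
      ¬ Deriv sigFL eqAxioms
        {Fm.imp (.all (eqF t u)) (eqF (.app .lsym ![t]) (.app .lsym ![u]))}) := by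
  have not_deriv : ¬ Deriv sigFL eqAxioms {Fm.imp extHyp extConc} := by
    intro h
    let k₀ : markedModel.Carrier 0 := (none, false)
    obtain ⟨B, hB, hext⟩ := h.sound markedModel k₀ (fun _ => k₀)
      (markedModel_isNormal.realize_of_mem_eqAxioms _ _)
    obtain rfl := Multiset.mem_singleton.1 hB
    exact markedModel_not_realize_extConc _ _ (hext (markedModel_realize_extHyp _ _))
  refine ⟨not_deriv, .app .fsym ![.bvar 0], .bvar 0, ?_, Nat.zero_lt_one, not_deriv⟩
  exact Fin.forall_fin_one.2 Nat.zero_lt_one
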